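/- arXiv:0802.0104 — 2 statements merged into one kernel-verified Lean document; each statement's English description precedes it below -/
import Mathlib

section
/- The set of zeros of the entire function f₁(s) in the right half-plane Re(s) > 1/3 is finite. In particular, the set of zeros of f₁ with Re(s) ≥ 1/2 is finite. -/
open Complex

noncomputable def chi (s : ℂ) : ℂ := s * (s - 1) * completedRiemannZeta₀ s + 1

noncomputable def A : ℂ := Real.pi / 3 - 1

noncomputable def f1 (s : ℂ) : ℂ :=
  (s - 1) * ((s - 1) * (3 * s - 2) * (A * s - A + 1) * chi (s + 1) * chi (3 * s)
    - (s + 1) * (s - 2) * chi s * chi (3 * s - 1)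
    - 2 * (s - 1) * (s - 2) * chi s * chi (3 * s))

noncomputable def f2 (s : ℂ) : ℂ :=
  (s - 2) * ((A * s + 3) * (s - 1) ^ 2 * chi (s + 2)
    - 2 * (s - 1) * (s - 3) * chi (s + 1)
    - (s + 2) * (s - 3) * chi s)

noncomputable def Z1 (s : ℂ) : ℂ := chi (2 * s) * f1 s - chi (2 * s - 1) * f1 (1 - s)

noncomputable def Z2 (s : ℂ) : ℂ := chi (2 * s) * f2 s - chi (2 * s - 1) * f2 (1 - s)

open ComplexConjugate in
lemma Lam0_conj (s : ℂ) : completedRiemannZeta₀ (conj s) = conj (completedRiemannZeta₀ s) := by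
  unfold completedRiemannZeta₀ HurwitzZeta.completedHurwitzZetaEven₀ WeakFEPair.Λ₀ mellin
  rw [map_div₀, ← integral_conj]
  congr 1
  · refine MeasureTheory.setIntegral_congr_fun measurableSet_Ioi fun t (ht : 0 < t) => ?_
    have h1 : conj ((HurwitzZeta.hurwitzEvenFEPair 0).f_modif t)
        = (HurwitzZeta.hurwitzEvenFEPair 0).f_modif t := by
      simp only [WeakFEPair.f_modif, HurwitzZeta.hurwitzEvenFEPair, Pi.add_apply, Set.indicator]
      split_ifs <;> simp
    have h2 : (t : ℂ) ^ ((conj s) / 2 - 1) = conj ((t : ℂ) ^ (s / 2 - 1)) := by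
      have h3 : (t : ℂ).arg ≠ Real.pi := by
        rw [Complex.arg_ofReal_of_nonneg ht.le]; exact Real.pi_pos.ne
      have := Complex.cpow_conj (t : ℂ) (s / 2 - 1) h3
      have h4 : conj (2:ℂ) = 2 := Complex.conj_ofNat 2
      simpa [h4] using this
    simp only [smul_eq_mul, map_mul, h1, h2]
  · exact (Complex.conj_ofNat 2).symm

open ComplexConjugate in
lemma chi_conj (s : ℂ) : chi (conj s) = conj (chi s) := by
  simp [chi, Lam0_conj]

lemma chi_one_sub (s : ℂ) : chi (1 - s) = chi s := by
  simp only [chi, completedRiemannZeta₀_one_sub]; ring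

lemma chi_eq {s : ℂ} (h0 : 0 < s.re) (h1 : s ≠ 1) :
    chi s = s * (s - 1) * (Gammaℝ s * riemannZeta s) := by
  have hs : s ≠ 0 := by rintro rfl; simp at h0
  have hG := Complex.Gammaℝ_ne_zero_of_re_pos h0
  have h2 : 1 - s ≠ 0 := sub_ne_zero.mpr h1.symm
  rw [riemannZeta_def_of_ne_zero hs, mul_div_cancel₀ _ hG, completedRiemannZeta_eq, chi]
  field_simp
  ring

lemma chi_one : chi 1 = 1 := by simp [chi]

lemma chi_ne_zero {s : ℂ} (h : 1 ≤ s.re) : chi s ≠ 0 := by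
  by_cases h1 : s = 1
  · rw [h1, chi_one]; exact one_ne_zero
  have h0 : 0 < s.re := by linarith
  rw [chi_eq h0 h1]
  have hs : s ≠ 0 := by rintro rfl; simp at h0
  exact mul_ne_zero (mul_ne_zero hs (sub_ne_zero.mpr h1))
    (mul_ne_zero (Complex.Gammaℝ_ne_zero_of_re_pos h0) (riemannZeta_ne_zero_of_one_le_re h))

lemma chi_diff : Differentiable ℂ chi := by
  have := differentiable_completedZeta₀
  unfold chi
  fun_prop

lemma mellin_bdd (f : ℝ → ℂ) (h : ∀ s, MellinConvergent f s) :
    ∃ K : ℝ, 0 ≤ K ∧ ∀ s : ℂ, 0 ≤ s.re → s.re ≤ 1 → ‖mellin f s‖ ≤ K := by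
  have i0 := (h 0).norm
  have i1 := (h 1).norm
  have i := i0.add i1
  refine ⟨∫ t in Set.Ioi (0:ℝ), (‖(t:ℂ) ^ ((0:ℂ) - 1) • f t‖ + ‖(t:ℂ) ^ ((1:ℂ) - 1) • f t‖), ?_, fun s h0 h1 => ?_⟩
  rotate_left 1
  · unfold mellin
    refine MeasureTheory.norm_integral_le_of_norm_le i ?_
    refine (MeasureTheory.ae_restrict_iff' measurableSet_Ioi).mpr (Filter.Eventually.of_forall ?_)
    intro t (ht : 0 < t)
    simp only [norm_smul, Complex.norm_cpow_eq_rpow_re_of_pos ht]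
    rw [← add_mul]
    gcongr
    simp only [sub_re, one_re, zero_re]
    rcases le_total t 1 with h | h
    · have := Real.rpow_le_rpow_of_exponent_ge ht h (show (0:ℝ) - 1 ≤ s.re - 1 by linarith)
      have := Real.rpow_nonneg ht.le ((1:ℝ)-1)
      linarith
    · have := Real.rpow_le_rpow_of_exponent_le h (show s.re - 1 ≤ (1:ℝ) - 1 by linarith)
      have := Real.rpow_nonneg ht.le ((0:ℝ)-1)
      linarith
  · refine MeasureTheory.integral_nonneg fun t => ?_
    simp only [Pi.zero_apply]
    positivity

lemma Lam0_bdd : ∃ K : ℝ, 0 ≤ K ∧ ∀ s : ℂ, 0 ≤ s.re → s.re ≤ 2 → ‖completedRiemannZeta₀ s‖ ≤ K := by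
  obtain ⟨K, hK, h⟩ := mellin_bdd (HurwitzZeta.hurwitzEvenFEPair 0).f_modif
    (fun s => ((HurwitzZeta.hurwitzEvenFEPair 0).isStrongFEPair_toStrongFEPair.hasMellin s).1)
  refine ⟨K, hK, fun s h0 h2 => ?_⟩
  have := h (s / 2) (by simp; linarith) (by simp; linarith)
  unfold completedRiemannZeta₀ HurwitzZeta.completedHurwitzZetaEven₀ WeakFEPair.Λ₀
  rw [norm_div]
  simp only [Complex.norm_ofNat]
  linarith

lemma chi_bdd : ∃ K : ℝ, 0 ≤ K ∧ ∀ s : ℂ, 0 ≤ s.re → s.re ≤ 2 → 1 ≤ |s.im| →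
    ‖chi s‖ ≤ K * |s.im| ^ 2 := by
  obtain ⟨K, hK, h⟩ := Lam0_bdd
  refine ⟨9 * K + 1, by positivity, fun s h0 h2 h3 => ?_⟩
  have a1 : ‖s‖ ≤ 3 * |s.im| := by
    have := Complex.norm_le_abs_re_add_abs_im s
    rw [abs_of_nonneg h0] at this
    linarith
  have a2 : ‖s - 1‖ ≤ 3 * |s.im| := by
    have := Complex.norm_le_abs_re_add_abs_im (s - 1)
    have h4 : |(s - 1).re| ≤ 1 := by rw [abs_le]; simp; constructor <;> linarith
    simp at this h4
    linarith
  calc ‖chi s‖ ≤ ‖s‖ * ‖s - 1‖ * ‖completedRiemannZeta₀ s‖ + 1 := by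
        unfold chi
        refine (norm_add_le _ _).trans ?_
        simp
    _ ≤ (3 * |s.im|) * (3 * |s.im|) * K + 1 := by
        gcongr
        exact h s h0 h2
    _ ≤ _ := by nlinarith
lemma norm_Gamma_le {z : ℂ} (h : 0 < z.re) : ‖Complex.Gamma z‖ ≤ Real.Gamma z.re := by
  rw [Complex.Gamma_eq_integral h, Real.Gamma_eq_integral h, Complex.GammaIntegral]
  refine MeasureTheory.norm_integral_le_of_norm_le (Real.GammaIntegral_convergent h) ?_
  refine (MeasureTheory.ae_restrict_iff' measurableSet_Ioi).mpr (Filter.Eventually.of_forall ?_)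
  intro t (ht : 0 < t)
  rw [norm_mul, Complex.norm_cpow_eq_rpow_re_of_pos ht]
  simp [Complex.norm_exp]

lemma norm_sin_le (w : ℂ) : ‖Complex.sin w‖ ≤ Real.exp |w.im| := by
  rw [Complex.sin, norm_div, norm_mul, Complex.norm_I, Complex.norm_ofNat, mul_one]
  have h1 : ‖Complex.exp (-w * I)‖ ≤ Real.exp |w.im| := by
    rw [Complex.norm_exp]; gcongr; simp; exact le_abs_self _
  have h2 : ‖Complex.exp (w * I)‖ ≤ Real.exp |w.im| := by
    rw [Complex.norm_exp]; gcongr; simp; exact neg_le_abs _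
  have := norm_sub_le (Complex.exp (-w * I)) (Complex.exp (w * I))
  linarith

lemma Gamma_lower : ∃ K : ℝ, 0 < K ∧ ∀ z : ℂ, 1 / 2 ≤ z.re → z.re ≤ 3 / 2 → 1 / 2 ≤ |z.im| →
    1 ≤ K * Real.exp (4 * |z.im|) * ‖Complex.Gamma z‖ := by
  obtain ⟨K, hK⟩ : ∃ K, ∀ x ∈ Set.Icc (3 / 2 : ℝ) (5 / 2), ‖Real.Gamma x‖ ≤ K := by
    refine isCompact_Icc.exists_bound_of_continuousOn fun x hx => ?_
    refine (Real.differentiableAt_Gamma fun m => ?_).continuousAt.continuousWithinAt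
    have : (0:ℝ) ≤ m := m.cast_nonneg
    have := hx.1
    intro h; linarith
  have K0 : 0 ≤ K := (norm_nonneg _).trans (hK 2 ⟨by norm_num, by norm_num⟩)
  refine ⟨4 * K + 1, by positivity, fun z h1 h2 h3 => ?_⟩
  have n1 : 1 / 2 ≤ ‖1 - z‖ := h3.trans (by simpa using Complex.abs_im_le_norm (1 - z))
  have n2 : 1 / 2 ≤ ‖2 - z‖ := h3.trans (by simpa using Complex.abs_im_le_norm (2 - z))
  have e1 : Complex.Gamma (3 - z) = (2 - z) * ((1 - z) * Complex.Gamma (1 - z)) := by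
    rw [← Complex.Gamma_add_one (1 - z) (by intro h; rw [h] at n1; norm_num at n1),
      show 1 - z + 1 = 2 - z by ring,
      ← Complex.Gamma_add_one (2 - z) (by intro h; rw [h] at n2; norm_num at n2)]
    congr 1; ring
  have e2 : ‖Complex.Gamma (3 - z)‖ ≤ K := by
    have r : (3 - z).re = 3 - z.re := by simp
    refine (norm_Gamma_le (by rw [r]; linarith)).trans ((le_abs_self _).trans (hK _ ?_))
    rw [r]; constructor <;> linarith
  have e3 : ‖Complex.Gamma (1 - z)‖ ≤ 4 * K := by
    rw [e1, norm_mul, norm_mul] at e2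
    have hh : 1 / 2 * (1 / 2 * ‖Complex.Gamma (1 - z)‖) ≤ K := le_trans (by gcongr) e2
    linarith
  have e4 := Complex.Gamma_mul_Gamma_one_sub z
  have hs : Complex.sin (Real.pi * z) ≠ 0 := by
    rw [Complex.sin_ne_zero_iff]
    intro k hk
    have : z = k := by
      have hp : (Real.pi : ℂ) ≠ 0 := by exact_mod_cast Real.pi_ne_zero
      rw [mul_comm] at hk
      exact mul_right_cancel₀ hp hk
    rw [this] at h3; norm_num at h3
  have e5 : ‖Complex.Gamma z‖ * ‖Complex.Gamma (1 - z)‖ * ‖Complex.sin (Real.pi * z)‖ = Real.pi := by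
    rw [← norm_mul, ← norm_mul, e4, div_mul_cancel₀ _ hs]
    simp [abs_of_pos Real.pi_pos]
  have e6 : ‖Complex.sin (Real.pi * z)‖ ≤ Real.exp (4 * |z.im|) := by
    refine (norm_sin_le _).trans ?_
    have : |(Real.pi * z).im| = Real.pi * |z.im| := by
      simp [abs_mul, abs_of_pos Real.pi_pos]
    rw [this]
    gcongr
    exact Real.pi_le_four
  calc (1:ℝ) ≤ Real.pi := by linarith [Real.pi_gt_three]
    _ = _ := e5.symm
    _ ≤ ‖Complex.Gamma z‖ * (4 * K + 1) * Real.exp (4 * |z.im|) := by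
        gcongr; linarith
    _ = _ := by ring

lemma Gammaℝ_lower : ∃ K : ℝ, 0 < K ∧ ∀ w : ℂ, 1 ≤ w.re → w.re ≤ 3 → 1 ≤ |w.im| →
    1 ≤ K * Real.exp (2 * |w.im|) * ‖Gammaℝ w‖ := by
  obtain ⟨K, hK, h⟩ := Gamma_lower
  refine ⟨Real.pi ^ (3 / 2 : ℝ) * K, by positivity, fun w h1 h2 h3 => ?_⟩
  have r : (w / 2).re = w.re / 2 := by simp
  have i : |(w / 2).im| = |w.im| / 2 := by simp [abs_div]
  have := h (w / 2) (by rw [r]; linarith) (by rw [r]; linarith) (by rw [i]; linarith)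
  rw [i, show 4 * (|w.im| / 2) = 2 * |w.im| by ring] at this
  rw [Gammaℝ, norm_mul, Complex.norm_cpow_eq_rpow_re_of_pos Real.pi_pos]
  have h4 : (1:ℝ) ≤ Real.pi ^ (3 / 2 : ℝ) * Real.pi ^ (-w / 2).re := by
    rw [← Real.rpow_add Real.pi_pos]
    apply Real.one_le_rpow (by linarith [Real.pi_gt_three])
    simp; linarith
  calc (1:ℝ) = 1 * 1 := by ring
    _ ≤ _ := mul_le_mul h4 this (by norm_num) (by positivity)
    _ = _ := by ring

lemma zeta_inv_le {w : ℂ} (h : 1 < w.re) : 1 ≤ ‖riemannZeta w.re‖ * ‖riemannZeta w‖ := by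
  have h' : 1 < ((w.re : ℝ) : ℂ).re := by simpa using h
  have e := ArithmeticFunction.LSeries_zeta_mul_Lseries_moebius h
  rw [ArithmeticFunction.LSeries_zeta_eq_riemannZeta h] at e
  have b : ‖LSeries (fun n => ((ArithmeticFunction.moebius n : ℤ) : ℂ)) w‖ ≤ ‖riemannZeta w.re‖ := by
    have hz : riemannZeta w.re = ((∑' n : ℕ, 1 / (n : ℝ) ^ w.re : ℝ) : ℂ) := by
      rw [zeta_eq_tsum_one_div_nat_cpow h', Complex.ofReal_tsum]
      congr 1; ext n
      rw [Complex.ofReal_div, Complex.ofReal_cpow n.cast_nonneg]; simp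
    have hs : Summable (fun n : ℕ => 1 / (n : ℝ) ^ w.re) := Real.summable_one_div_nat_rpow.mpr h
    rw [hz, Complex.norm_real]
    refine le_trans ?_ (le_abs_self _)
    unfold LSeries
    refine tsum_of_norm_bounded hs.hasSum fun n => ?_
    rcases Nat.eq_zero_or_pos n with rfl | hn
    · simp; positivity
    · rw [LSeries.norm_term_eq, if_neg hn.ne']
      gcongr
      have := ArithmeticFunction.abs_moebius_le_one (n := n)
      rw [Complex.norm_intCast]
      exact_mod_cast this
  calc (1:ℝ) = ‖riemannZeta w * LSeries (fun n => ((ArithmeticFunction.moebius n : ℤ) : ℂ)) w‖ := by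
        rw [e]; simp
    _ ≤ _ := by rw [norm_mul, mul_comm]; gcongr

lemma zeta_lower : ∃ K : ℝ, 0 < K ∧ ∀ w : ℂ, 1 < w.re → w.re ≤ 3 →
    w.re - 1 ≤ K * ‖riemannZeta w‖ := by
  obtain ⟨K, hK⟩ : ∃ K, ∀ x ∈ Set.Icc (1 : ℝ) 3, ‖chi x * (Gammaℝ x)⁻¹‖ ≤ K := by
    refine isCompact_Icc.exists_bound_of_continuousOn (Continuous.continuousOn ?_)
    have := chi_diff.continuous
    have := Complex.differentiable_Gammaℝ_inv.continuous
    have h2 := Complex.continuous_ofReal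
    exact (chi_diff.continuous.comp h2).mul (this.comp h2)
  have K0 : 0 ≤ K := (norm_nonneg _).trans (hK 2 ⟨by norm_num, by norm_num⟩)
  refine ⟨K + 1, by positivity, fun w h1 h2 => ?_⟩
  have hw := hK w.re ⟨h1.le, h2⟩
  have h0 : 0 < ((w.re : ℝ) : ℂ).re := by simp; linarith
  have hne : ((w.re : ℝ) : ℂ) ≠ 1 := by
    intro h; have := congrArg Complex.re h; simp at this; linarith
  have hG := Complex.Gammaℝ_ne_zero_of_re_pos h0
  have hr : ∀ a b : ℂ, a * (Gammaℝ w.re * b) * (Gammaℝ w.re)⁻¹ =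
    a * b * (Gammaℝ w.re * (Gammaℝ w.re)⁻¹) := by intros; ring
  rw [chi_eq h0 hne, hr, mul_inv_cancel₀ hG, mul_one,
    norm_mul, norm_mul] at hw
  · have a1 : ‖(w.re : ℂ)‖ = w.re := by simp; linarith
    have a2 : ‖(w.re : ℂ) - 1‖ = w.re - 1 := by
      rw [show (w.re : ℂ) - 1 = ((w.re - 1 : ℝ) : ℂ) by simp, Complex.norm_real, Real.norm_eq_abs,
        abs_of_pos (by linarith)]
    rw [a1, a2] at hw
    have hz := zeta_inv_le h1
    have h5 : (w.re - 1) * ‖riemannZeta w.re‖ ≤ K := by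
      refine le_trans ?_ hw
      have : 0 ≤ (w.re - 1) * ‖riemannZeta w.re‖ := mul_nonneg (by linarith) (norm_nonneg _)
      nlinarith
    calc w.re - 1 ≤ (w.re - 1) * (‖riemannZeta w.re‖ * ‖riemannZeta w‖) :=
          le_mul_of_one_le_right (by linarith) hz
      _ = ((w.re - 1) * ‖riemannZeta w.re‖) * ‖riemannZeta w‖ := by ring
      _ ≤ _ := by gcongr; linarith

lemma chi_lower : ∃ K : ℝ, 0 < K ∧ ∀ w : ℂ, 1 ≤ w.re → w.re ≤ 3 → 1 ≤ |w.im| →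
    w.re - 1 ≤ K * Real.exp (2 * |w.im|) * ‖chi w‖ := by
  obtain ⟨K, hK, hz⟩ := zeta_lower
  obtain ⟨M, hM, hG⟩ := Gammaℝ_lower
  refine ⟨K * M, by positivity, fun w h1 h2 h3 => ?_⟩
  rcases h1.eq_or_lt with h | h
  · rw [← h, sub_self]; positivity
  have hne : w ≠ 1 := by rintro rfl; simp at h
  rw [chi_eq (by linarith) hne]
  simp only [norm_mul]
  have n1 : 1 ≤ ‖w‖ := h3.trans (Complex.abs_im_le_norm w)
  have n2 : 1 ≤ ‖w - 1‖ := h3.trans (by simpa using Complex.abs_im_le_norm (w - 1))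
  have hz := hz w h h2
  have hG := hG w h1 h2 h3
  have q := mul_le_mul hz hG (by norm_num) (by positivity)
  have n3 : 1 ≤ ‖w‖ * ‖w - 1‖ := by nlinarith
  calc w.re - 1 = (w.re - 1) * 1 := by ring
    _ ≤ _ := q
    _ ≤ (K * ‖riemannZeta w‖ * (M * Real.exp (2 * |w.im|) * ‖Gammaℝ w‖)) * (‖w‖ * ‖w - 1‖) :=
        le_mul_of_one_le_right (by positivity) n3
    _ = _ := by ring
lemma zeta_upper : ∃ Z : ℝ, 0 < Z ∧ ∀ w : ℂ, 2 ≤ w.re → ‖riemannZeta w‖ ≤ Z := by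
  have hs : Summable (fun n : ℕ => 1 / (n : ℝ) ^ (2:ℝ)) :=
    Real.summable_one_div_nat_rpow.mpr (by norm_num)
  refine ⟨(∑' n : ℕ, 1 / (n : ℝ) ^ (2:ℝ)) + 1, ?_, fun w h => ?_⟩
  · have : 0 ≤ ∑' n : ℕ, 1 / (n : ℝ) ^ (2:ℝ) := tsum_nonneg fun n => by positivity
    linarith
  rw [zeta_eq_tsum_one_div_nat_cpow (by linarith)]
  refine le_trans (tsum_of_norm_bounded hs.hasSum fun n => ?_) (by linarith)
  rcases Nat.eq_zero_or_pos n with rfl | hn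
  · have : w ≠ 0 := by rintro rfl; norm_num at h
    simp [this]
  · rw [norm_div, norm_one, Complex.norm_natCast_cpow_of_pos hn]
    gcongr
    exact_mod_cast hn

lemma beta_bdd : ∃ B : ℝ, 0 ≤ B ∧ ∀ a : ℂ, 1 ≤ a.re → ‖Complex.betaIntegral a (1 / 2)‖ ≤ B := by
  have hc := (Complex.betaIntegral_convergent (u := 1) (v := 1 / 2) (by simp) (by norm_num)).norm
  refine ⟨∫ x in (0:ℝ)..1, ‖(x : ℂ) ^ ((1:ℂ) - 1) * (1 - (x : ℂ)) ^ ((1 / 2 : ℂ) - 1)‖,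
    intervalIntegral.integral_nonneg (by norm_num) fun x _ => norm_nonneg _, fun a ha => ?_⟩
  unfold Complex.betaIntegral
  refine intervalIntegral.norm_integral_le_of_norm_le (by norm_num) ?_ hc
  refine Filter.Eventually.of_forall fun x hx => ?_
  rw [norm_mul, norm_mul]
  gcongr
  rw [Complex.norm_cpow_eq_rpow_re_of_pos hx.1, Complex.norm_cpow_eq_rpow_re_of_pos hx.1]
  apply Real.rpow_le_rpow_of_exponent_ge hx.1 hx.2
  simp; linarith

lemma right_bdd : ∃ C : ℝ, 0 < C ∧ ∀ w : ℂ, 3 ≤ w.re → ‖chi (w - 1)‖ ≤ C * ‖chi w‖ := by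
  obtain ⟨Z, hZ, hz⟩ := zeta_upper
  obtain ⟨B, hB, hb⟩ := beta_bdd
  have g0 : (0:ℝ) < ‖Complex.Gamma (1 / 2)‖ :=
    norm_pos_iff.mpr (Complex.Gamma_ne_zero_of_re_pos (by norm_num))
  refine ⟨Real.pi ^ (1 / 2 : ℝ) * (B / ‖Complex.Gamma (1 / 2)‖) * (Z * Z) + 1, by positivity,
    fun w h => ?_⟩
  have r1 : (w - 1).re = w.re - 1 := by simp
  have ne1 : w ≠ 1 := by rintro rfl; norm_num at h
  have ne2 : w - 1 ≠ 1 := by intro h'; rw [h'] at r1; norm_num at r1; linarith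
  have hgam : ‖Complex.Gamma ((w - 1) / 2)‖ ≤
      (B / ‖Complex.Gamma (1 / 2)‖) * ‖Complex.Gamma (w / 2)‖ := by
    have r2 : ((w - 1) / 2).re = (w.re - 1) / 2 := by simp
    have e := Complex.Gamma_mul_Gamma_eq_betaIntegral (s := (w - 1) / 2) (t := 1 / 2)
      (by rw [r2]; linarith) (by norm_num)
    rw [show (w - 1) / 2 + 1 / 2 = w / 2 by ring] at e
    have e' := congrArg norm e
    rw [norm_mul, norm_mul] at e'
    rw [div_mul_eq_mul_div, le_div_iff₀ g0, e', mul_comm]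
    gcongr
    exact hb _ (by rw [r2]; linarith)
  have hGR : ‖Gammaℝ (w - 1)‖ ≤
      Real.pi ^ (1 / 2 : ℝ) * (B / ‖Complex.Gamma (1 / 2)‖) * ‖Gammaℝ w‖ := by
    rw [Gammaℝ, Gammaℝ, norm_mul, norm_mul, Complex.norm_cpow_eq_rpow_re_of_pos Real.pi_pos,
      Complex.norm_cpow_eq_rpow_re_of_pos Real.pi_pos]
    have : (-(w - 1) / 2).re = 1 / 2 + (-w / 2).re := by simp; ring
    rw [this, Real.rpow_add Real.pi_pos]
    calc _ ≤ Real.pi ^ (1 / 2 : ℝ) * Real.pi ^ (-w / 2).re *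
          ((B / ‖Complex.Gamma (1 / 2)‖) * ‖Complex.Gamma (w / 2)‖) := by gcongr
      _ = _ := by ring
  have hzz : ‖riemannZeta (w - 1)‖ ≤ Z * Z * ‖riemannZeta w‖ := by
    have a1 := hz (w - 1) (by rw [r1]; linarith)
    have a2 := zeta_inv_le (w := w) (by linarith)
    have a3 := hz (w.re : ℂ) (by simp; linarith)
    have a4 : 1 ≤ Z * ‖riemannZeta w‖ := a2.trans (by gcongr)
    calc _ ≤ Z := a1
      _ ≤ Z * (Z * ‖riemannZeta w‖) := le_mul_of_one_le_right hZ.le a4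
      _ = _ := by ring
  have hw : ‖w - 1 - 1‖ ≤ ‖w‖ := by
    rw [← sq_le_sq₀ (norm_nonneg _) (norm_nonneg _), ← Complex.normSq_eq_norm_sq,
      ← Complex.normSq_eq_norm_sq, Complex.normSq_apply, Complex.normSq_apply]
    simp; nlinarith
  rw [chi_eq (by linarith) ne1, chi_eq (by rw [r1]; linarith) ne2]
  simp only [norm_mul]
  calc _ ≤ ‖w - 1‖ * ‖w‖ * ((Real.pi ^ (1 / 2 : ℝ) * (B / ‖Complex.Gamma (1 / 2)‖) * ‖Gammaℝ w‖) *
        (Z * Z * ‖riemannZeta w‖)) := by gcongr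
    _ = (Real.pi ^ (1 / 2 : ℝ) * (B / ‖Complex.Gamma (1 / 2)‖) * (Z * Z)) *
        (‖w‖ * ‖w - 1‖ * (‖Gammaℝ w‖ * ‖riemannZeta w‖)) := by ring
    _ ≤ _ := by gcongr; linarith

lemma left_eq {w : ℂ} (h : w.re = 1) : ‖chi (w - 1)‖ = ‖chi w‖ := by
  rw [← chi_one_sub (w - 1)]
  have : 1 - (w - 1) = (starRingEnd ℂ) w := by
    apply Complex.ext
    · simp; linarith
    · simp
  rw [this, chi_conj, Complex.norm_conj]

lemma norm_exp_sq (ε : ℝ) (w : ℂ) : ‖Complex.exp (ε * w ^ 2)‖ = Real.exp (ε * (w.re ^ 2 - w.im ^ 2)) := by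
  rw [Complex.norm_exp]
  congr 1
  rw [Complex.re_ofReal_mul, pow_two, Complex.mul_re]
  ring

set_option maxHeartbeats 1000000 in
lemma strip_T : ∃ M : ℝ, 0 < M ∧ ∃ K : ℝ, 0 < K ∧ ∀ ε T : ℝ, 0 < ε → 1 ≤ T → 5 / ε ≤ T → K ≤ T →
    ∀ w : ℂ, 1 ≤ w.re → w.re ≤ 3 → |w.im| ≤ T →
    ‖chi (w - 1) / chi w * (((w - 1) ^ 2 + T ^ 2) / T ^ 2) * Complex.exp (ε * w ^ 2)‖
      ≤ M * Real.exp (9 * ε) := by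
  obtain ⟨C, hC, hright⟩ := right_bdd
  obtain ⟨K1, hK1, hup⟩ := chi_bdd
  obtain ⟨K2, hK2, hlow⟩ := chi_lower
  refine ⟨6 * C + 1, by positivity, 4 * K1 * K2 + 1, by positivity, ?_⟩
  intro ε T hε hT hT5 hTK w hw1 hw3 hwT
  have T0 : 0 < T := by linarith
  have TC : (T : ℂ) ≠ 0 := by exact_mod_cast T0.ne'
  set U : Set ℂ := Set.Ioo 1 3 ×ℂ Set.Ioo (-T) T with hU
  have hcl : closure U = Set.Icc 1 3 ×ℂ Set.Icc (-T) T := by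
    rw [hU, Complex.closure_reProdIm, closure_Ioo (by norm_num), closure_Ioo (by linarith)]
  have hbd : Bornology.IsBounded U := (Metric.isBounded_Ioo 1 3).reProdIm (Metric.isBounded_Ioo _ _)
  have hd : DiffContOnCl ℂ (fun w : ℂ =>
      chi (w - 1) / chi w * (((w - 1) ^ 2 + (T:ℂ) ^ 2) / (T:ℂ) ^ 2) * Complex.exp (ε * w ^ 2)) U := by
    apply DifferentiableOn.diffContOnCl
    intro z hz
    rw [hcl, Complex.mem_reProdIm] at hz
    have hz0 := chi_ne_zero hz.1.1
    have d1 : DifferentiableAt ℂ chi z := chi_diff z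
    have d2 : DifferentiableAt ℂ (fun w => chi (w - 1)) z :=
      (chi_diff.comp (differentiable_id.sub_const 1)) z
    have d3 : DifferentiableAt ℂ (fun w => chi (w - 1) / chi w) z := d2.div d1 hz0
    refine DifferentiableAt.differentiableWithinAt ?_
    refine (d3.mul ?_).mul ?_ <;> fun_prop
  refine Complex.norm_le_of_forall_mem_frontier_norm_le hbd hd ?_ (z := w) ?_
  swap
  · rw [hcl, Complex.mem_reProdIm]
    exact ⟨⟨hw1, hw3⟩, abs_le.mp hwT⟩
  clear hw1 hw3 hwT w
  intro w hw
  rw [hU, Complex.frontier_reProdIm, closure_Ioo (by norm_num), closure_Ioo (by linarith),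
    frontier_Ioo (show -T < T by linarith),
    frontier_Ioo (show (1:ℝ) < 3 by norm_num)] at hw
  have hre : 1 ≤ w.re ∧ w.re ≤ 3 := by
    rcases hw with ⟨h, -⟩ | ⟨h, -⟩
    · exact h
    · rcases h with h | h <;> (rw [h]; norm_num)
  have him : |w.im| ≤ T := by
    rw [abs_le]
    rcases hw with ⟨-, h⟩ | ⟨-, h⟩
    · rcases h with h | h <;> (rw [h]; constructor <;> linarith)
    · exact h
  have hpos : 0 < ‖chi w‖ := norm_pos_iff.mpr (chi_ne_zero hre.1)
  have hT2 : ‖(T:ℂ) ^ 2‖ = T ^ 2 := by simp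
  rw [norm_mul, norm_mul, norm_div, norm_div, hT2, norm_exp_sq]
  have hexp : Real.exp (ε * (w.re ^ 2 - w.im ^ 2)) ≤ Real.exp (9 * ε) := by
    apply Real.exp_le_exp.mpr
    have : w.re ^ 2 - w.im ^ 2 ≤ 9 := by nlinarith [sq_nonneg w.im, hre.1, hre.2]
    nlinarith
  have hpoly : ‖(w - 1) ^ 2 + (T:ℂ) ^ 2‖ / T ^ 2 ≤ 6 := by
    rw [div_le_iff₀ (by positivity)]
    refine (norm_add_le _ _).trans ?_
    rw [hT2, norm_pow, ← Complex.normSq_eq_norm_sq, Complex.normSq_apply]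
    have : w.im ^ 2 ≤ T ^ 2 := sq_le_sq' (by linarith [(abs_le.mp him).1]) (abs_le.mp him).2
    simp; nlinarith
  have hcases : w.re = 1 ∨ w.re = 3 ∨ |w.im| = T := by
    rcases hw with ⟨-, h⟩ | ⟨h, -⟩
    · right; right
      rcases h with h | h
      · rw [h, abs_neg, abs_of_pos T0]
      · rw [h, abs_of_pos T0]
    · rcases h with h | h
      · exact Or.inl h
      · exact Or.inr (Or.inl h)
  rcases hcases with h | h | h
  · rw [left_eq h, div_self hpos.ne', one_mul]
    have : ‖(w - 1) ^ 2 + (T:ℂ) ^ 2‖ / T ^ 2 ≤ 1 := by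
      rw [div_le_one (by positivity)]
      have e : (w - 1) ^ 2 + (T:ℂ) ^ 2 = ((T ^ 2 - w.im ^ 2 : ℝ) : ℂ) := by
        have : w = 1 + w.im * I := by
          apply Complex.ext <;> simp [h]
        conv_lhs => rw [this]
        push_cast
        ring_nf
        rw [I_sq]; ring
      rw [e, Complex.norm_real, Real.norm_eq_abs]
      have : w.im ^ 2 ≤ T ^ 2 := sq_le_sq' (by linarith [(abs_le.mp him).1]) (abs_le.mp him).2
      rw [abs_of_nonneg (by linarith)]
      nlinarith [sq_nonneg w.im]
    calc _ ≤ 1 * Real.exp (9 * ε) := by gcongr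
      _ ≤ _ := by gcongr; linarith
  · have : ‖chi (w - 1)‖ / ‖chi w‖ ≤ C := by
      rw [div_le_iff₀ hpos]; exact hright w h.ge
    calc _ ≤ C * 6 * Real.exp (9 * ε) := by gcongr
      _ ≤ _ := by gcongr; linarith
  · have im2 : w.im ^ 2 = T ^ 2 := by rw [← h, sq_abs]
    have u := hup (w - 1) (by simp; linarith) (by simp; linarith) (by simp; linarith)
    have l := hlow w hre.1 hre.2 (by linarith)
    rw [show (w - 1).im = w.im by simp, h] at u
    rw [h] at l
    have p : ‖(w - 1) ^ 2 + (T:ℂ) ^ 2‖ / T ^ 2 ≤ 4 * (w.re - 1) := by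
      rw [div_le_iff₀ (by positivity)]
      rw [← sq_le_sq₀ (norm_nonneg _) (by nlinarith [hre.1, sq_nonneg T]),
        ← Complex.normSq_eq_norm_sq, Complex.normSq_apply]
      have e1 : ((w - 1) ^ 2 + (T:ℂ) ^ 2).re = (w.re - 1) ^ 2 := by
        rw [pow_two, pow_two]; simp; nlinarith
      have e2 : ((w - 1) ^ 2 + (T:ℂ) ^ 2).im = 2 * (w.re - 1) * w.im := by
        rw [pow_two, pow_two]; simp; ring
      rw [e1, e2]
      have : (w.re - 1) ^ 2 ≤ 4 := by nlinarith [hre.1, hre.2]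
      have t1 : 1 ≤ T ^ 2 := by nlinarith
      have t2 : T ^ 2 ≤ T ^ 2 * T ^ 2 := by nlinarith
      have : (w.re - 1) ^ 2 * (w.re - 1) ^ 2 + 4 * ((w.re - 1) ^ 2 * w.im ^ 2) ≤
          (w.re - 1) ^ 2 * (16 * (T ^ 2 * T ^ 2)) := by
        rw [im2]
        have : (w.re - 1) ^ 2 * ((w.re - 1) ^ 2 + 4 * T ^ 2) ≤
            (w.re - 1) ^ 2 * (16 * (T ^ 2 * T ^ 2)) := by
          gcongr
          nlinarith
        linarith
      linarith
    have q : ‖chi (w - 1)‖ / ‖chi w‖ * (‖(w - 1) ^ 2 + (T:ℂ) ^ 2‖ / T ^ 2) ≤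
        4 * K1 * K2 * (T ^ 2 * Real.exp (2 * T)) := by
      calc _ ≤ (K1 * T ^ 2) / ‖chi w‖ * (4 * (K2 * Real.exp (2 * T) * ‖chi w‖)) := by
            gcongr; linarith
        _ = _ := by field_simp
    have hE : 4 * K1 * K2 * (T ^ 2 * Real.exp (2 * T)) * Real.exp (-(ε * T ^ 2)) ≤ 1 := by
      have a1 : T ≤ Real.exp T := by linarith [Real.add_one_le_exp T]
      have a2 : T ^ 2 ≤ Real.exp (2 * T) := by
        rw [two_mul, Real.exp_add]; nlinarith
      have a3 : 5 * T ≤ ε * T ^ 2 := by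
        rw [div_le_iff₀ hε] at hT5; nlinarith
      have a4 : Real.exp (-(ε * T ^ 2)) ≤ Real.exp (-(5 * T)) := by gcongr
      calc _ ≤ 4 * K1 * K2 * (Real.exp (2 * T) * Real.exp (2 * T)) * Real.exp (-(5 * T)) := by
            gcongr
        _ = 4 * K1 * K2 * Real.exp (-T) := by
            rw [← Real.exp_add, mul_assoc, ← Real.exp_add]; congr 2; ring
        _ ≤ Real.exp T * Real.exp (-T) := by gcongr; linarith
        _ = 1 := by rw [← Real.exp_add]; simp
    have hx : Real.exp (ε * (w.re ^ 2 - w.im ^ 2)) ≤ Real.exp (-(ε * T ^ 2)) * Real.exp (9 * ε) := by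
      rw [← Real.exp_add, im2]
      gcongr
      have : w.re ^ 2 ≤ 9 := by nlinarith [hre.1, hre.2]
      nlinarith
    calc _ ≤ 4 * K1 * K2 * (T ^ 2 * Real.exp (2 * T)) *
          (Real.exp (-(ε * T ^ 2)) * Real.exp (9 * ε)) := by gcongr
      _ = (4 * K1 * K2 * (T ^ 2 * Real.exp (2 * T)) * Real.exp (-(ε * T ^ 2))) *
          Real.exp (9 * ε) := by ring
      _ ≤ 1 * Real.exp (9 * ε) := by gcongr
      _ ≤ _ := by gcongr; linarith

open Filter Topology in
lemma half_bdd : ∃ M : ℝ, 0 < M ∧ ∀ w : ℂ, 1 ≤ w.re → ‖chi (w - 1)‖ ≤ M * ‖chi w‖ := by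
  obtain ⟨C, hC, hright⟩ := right_bdd
  obtain ⟨M, hM, K, hK, h⟩ := strip_T
  refine ⟨M + C, by positivity, fun w hw => ?_⟩
  rcases le_total 3 w.re with h3 | h3
  · refine (hright w h3).trans ?_
    gcongr; linarith
  have key : ∀ ε : ℝ, 0 < ε →
      ‖chi (w - 1) / chi w * Complex.exp (ε * w ^ 2)‖ ≤ M * Real.exp (9 * ε) := by
    intro ε hε
    have lim : Tendsto (fun T : ℝ => ‖chi (w - 1) / chi w * (((w - 1) ^ 2 + (T:ℂ) ^ 2) / (T:ℂ) ^ 2) *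
        Complex.exp (ε * w ^ 2)‖) atTop (𝓝 ‖chi (w - 1) / chi w * 1 * Complex.exp (ε * w ^ 2)‖) := by
      refine ((Tendsto.mul tendsto_const_nhds ?_).mul tendsto_const_nhds).norm
      have t1 : Tendsto (fun T : ℝ => (w - 1) ^ 2 * (((T⁻¹ : ℝ) : ℂ)) ^ 2 + 1) atTop
          (𝓝 ((w - 1) ^ 2 * (((0 : ℝ) : ℂ)) ^ 2 + 1)) := by
        refine Tendsto.add (Tendsto.mul tendsto_const_nhds (Tendsto.pow ?_ 2)) tendsto_const_nhds
        exact (Complex.continuous_ofReal.tendsto 0).comp tendsto_inv_atTop_zero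
      simp only [Complex.ofReal_zero, ne_eq, OfNat.ofNat_ne_zero, not_false_eq_true, zero_pow,
        mul_zero, zero_add] at t1
      refine t1.congr' ?_
      filter_upwards [eventually_gt_atTop 0] with T hT
      have TC : (T : ℂ) ≠ 0 := by exact_mod_cast hT.ne'
      push_cast
      field_simp
    rw [mul_one] at lim
    refine le_of_tendsto lim ?_
    filter_upwards [eventually_ge_atTop 1, eventually_ge_atTop (5 / ε), eventually_ge_atTop K,
      eventually_ge_atTop |w.im|] with T h1 h2 h4 h5
    exact h ε T hε h1 h2 h4 w hw h3 h5
  have hpos : 0 < ‖chi w‖ := norm_pos_iff.mpr (chi_ne_zero hw)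
  have fin : ‖chi (w - 1) / chi w‖ ≤ M := by
    have l1 : Tendsto (fun ε : ℝ => ‖chi (w - 1) / chi w * Complex.exp (ε * w ^ 2)‖) (𝓝[>] 0)
        (𝓝 ‖chi (w - 1) / chi w * Complex.exp ((0:ℝ) * w ^ 2)‖) := by
      refine Tendsto.mono_left (Continuous.tendsto ?_ 0) nhdsWithin_le_nhds
      fun_prop
    have l2 : Tendsto (fun ε : ℝ => M * Real.exp (9 * ε)) (𝓝[>] 0) (𝓝 (M * Real.exp (9 * 0))) := by
      refine Tendsto.mono_left (Continuous.tendsto ?_ 0) nhdsWithin_le_nhds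
      fun_prop
    have := le_of_tendsto_of_tendsto l1 l2 (eventually_mem_nhdsWithin.mono fun ε hε => key ε hε)
    simpa using this
  rw [norm_div, div_le_iff₀ hpos] at fin
  refine fin.trans ?_
  gcongr; linarith

lemma zeros_bdd : ∃ R : ℝ, ∀ s : ℂ, 1 / 3 ≤ s.re → f1 s = 0 → ‖s‖ ≤ R := by
  obtain ⟨M, hM, h⟩ := half_bdd
  set α : ℝ := Real.pi / 3 - 1 with hα
  have hA : A = (α : ℂ) := by simp [A, hα]
  have α0 : 0 < α := by rw [hα]; linarith [Real.pi_gt_three]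
  have α1 : α < 1 := by rw [hα]; linarith [Real.pi_lt_four]
  refine ⟨max 4 ((1 + 8 * M ^ 2 + 16 * M) / α), fun s hs hf => ?_⟩
  by_contra hcon
  rw [not_le, max_lt_iff] at hcon
  obtain ⟨h4, hR⟩ := hcon
  rw [div_lt_iff₀ α0] at hR
  have c1 := h (s + 1) (by simp; linarith)
  have c2 := h (3 * s) (by simp; linarith)
  rw [add_sub_cancel_right] at c1
  have n1 : 0 < ‖chi (s + 1)‖ := norm_pos_iff.mpr (chi_ne_zero (by simp; linarith))
  have n2 : 0 < ‖chi (3 * s)‖ := norm_pos_iff.mpr (chi_ne_zero (by simp; linarith))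
  have b1 : ‖s‖ / 2 ≤ ‖s - 1‖ := by
    have := norm_sub_norm_le s 1; rw [norm_one] at this; linarith
  have b2 : ‖s‖ ≤ ‖3 * s - 2‖ := by
    have := norm_sub_norm_le (3 * s) 2
    rw [norm_mul, Complex.norm_ofNat, Complex.norm_ofNat] at this; linarith
  have b3 : α * ‖s‖ - 1 ≤ ‖A * s - A + 1‖ := by
    have := norm_sub_norm_le ((α : ℂ) * s) ((α - 1 : ℝ) : ℂ)
    rw [norm_mul, Complex.norm_real, Complex.norm_real, Real.norm_eq_abs, Real.norm_eq_abs,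
      abs_of_pos α0, abs_of_neg (by linarith)] at this
    have e : A * s - A + 1 = (α : ℂ) * s - ((α - 1 : ℝ) : ℂ) := by rw [hA]; push_cast; ring
    rw [e]; linarith
  have b4 : ‖s + 1‖ ≤ 2 * ‖s‖ := by
    have := norm_add_le s 1; rw [norm_one] at this; linarith
  have b5 : ‖s - 2‖ ≤ 2 * ‖s‖ := by
    have := norm_sub_le s 2; rw [Complex.norm_ofNat] at this; linarith
  have b6 : ‖s - 1‖ ≤ 2 * ‖s‖ := by
    have := norm_sub_le s 1; rw [norm_one] at this; linarith
  have hs1 : s - 1 ≠ 0 := by intro h0; rw [h0, norm_zero] at b1; linarith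
  unfold f1 at hf
  have hf' := (mul_eq_zero.mp hf).resolve_left hs1
  have e : (s - 1) * (3 * s - 2) * (A * s - A + 1) * chi (s + 1) * chi (3 * s) =
      (s + 1) * (s - 2) * chi s * chi (3 * s - 1) + 2 * (s - 1) * (s - 2) * chi s * chi (3 * s) := by
    linear_combination hf'
  have e1 := congrArg norm e
  have e2 := norm_add_le ((s + 1) * (s - 2) * chi s * chi (3 * s - 1))
    (2 * (s - 1) * (s - 2) * chi s * chi (3 * s))
  rw [← e1] at e2
  simp only [norm_mul, Complex.norm_ofNat] at e2
  have pos : 0 < α * ‖s‖ - 1 := by nlinarith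
  have lo : (‖s‖ / 2) * ‖s‖ * (α * ‖s‖ - 1) * ‖chi (s + 1)‖ * ‖chi (3 * s)‖ ≤
      ‖s - 1‖ * ‖3 * s - 2‖ * ‖A * s - A + 1‖ * ‖chi (s + 1)‖ * ‖chi (3 * s)‖ := by
    gcongr
  have up : ‖s + 1‖ * ‖s - 2‖ * ‖chi s‖ * ‖chi (3 * s - 1)‖ +
      2 * ‖s - 1‖ * ‖s - 2‖ * ‖chi s‖ * ‖chi (3 * s)‖ ≤
      (2 * ‖s‖) * (2 * ‖s‖) * (M * ‖chi (s + 1)‖) * (M * ‖chi (3 * s)‖) +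
      2 * (2 * ‖s‖) * (2 * ‖s‖) * (M * ‖chi (s + 1)‖) * ‖chi (3 * s)‖ := by
    gcongr
  have fin := lo.trans (e2.trans up)
  have P : 0 < ‖s‖ ^ 2 * ‖chi (s + 1)‖ * ‖chi (3 * s)‖ := by positivity
  have : (‖s‖ ^ 2 * ‖chi (s + 1)‖ * ‖chi (3 * s)‖) * ((α * ‖s‖ - 1) / 2) ≤
      (‖s‖ ^ 2 * ‖chi (s + 1)‖ * ‖chi (3 * s)‖) * (4 * M ^ 2 + 8 * M) := by linarith
  have := le_of_mul_le_mul_left this P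
  linarith

open Filter Topology in
lemma zeros_finite : {s : ℂ | 1 / 3 ≤ s.re ∧ f1 s = 0}.Finite := by
  obtain ⟨R, hR⟩ := zeros_bdd
  by_contra hinf
  have hd : Differentiable ℂ f1 := by
    have := chi_diff
    unfold f1
    fun_prop
  have hsub : {s : ℂ | 1 / 3 ≤ s.re ∧ f1 s = 0} ⊆ Metric.closedBall 0 R := by
    intro s hs
    rw [mem_closedBall_zero_iff]
    exact hR s hs.1 hs.2
  obtain ⟨z, -, hz⟩ := Set.Infinite.exists_accPt_of_subset_isCompact hinf
    (isCompact_closedBall (0:ℂ) R) hsub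
  have hfr : ∃ᶠ y in 𝓝[≠] z, f1 y = 0 := by
    rw [accPt_iff_frequently_nhdsNE] at hz
    exact hz.mono fun y hy => hy.2
  have han : AnalyticOnNhd ℂ f1 Set.univ := fun x _ => hd.analyticAt x
  have h0 := han.eqOn_zero_of_preconnected_of_frequently_eq_zero isPreconnected_univ
    (Set.mem_univ z) hfr
  have h1 := hR ((|R| + 1 : ℝ) : ℂ) (by simp; linarith [abs_nonneg R]) (h0 (Set.mem_univ _))
  rw [Complex.norm_real, Real.norm_eq_abs, abs_of_pos (by positivity)] at h1
  linarith [le_abs_self R]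

theorem f1_finitely_many_zeros_right :
    {s : ℂ | 1 / 3 < s.re ∧ f1 s = 0}.Finite ∧
    {s : ℂ | 1 / 2 ≤ s.re ∧ f1 s = 0}.Finite := by
  constructor
  · exact zeros_finite.subset fun s hs => ⟨hs.1.le, hs.2⟩
  · exact zeros_finite.subset fun s hs => ⟨by linarith [hs.1], hs.2⟩
end

section
/- The set of zeros of the entire function f₂(s) in the right half-plane Re(s) > 0 is finite. In particular, the set of zeros of f₂ with Re(s) ≥ 1/2 is finite. -/
open Complex

lemma aux_cpow_deriv (a : ℂ) {x : ℝ} (hx : 0 < x) :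
    HasDerivAt (fun y : ℝ => (y : ℂ) ^ a) (a * (x : ℂ) ^ (a - 1)) x := by
  by_cases ha : a = 0
  · subst ha
    simpa using hasDerivAt_const x (1 : ℂ)
  · exact hasDerivAt_ofReal_cpow_const hx.ne' ha

noncomputable def hterm (n : ℕ) (s : ℂ) : ℂ :=
  (s - 1) * ((n : ℂ) + 1) ^ (-s) - (((n : ℂ) + 1) ^ (1 - s) - ((n : ℂ) + 2) ^ (1 - s))

lemma aux_cpow_diff (n : ℝ) (hn : 0 < n) (s : ℂ) (hs : 0 < s.re) (x : ℝ)
    (hx : x ∈ Set.Icc n (n + 1)) :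
    ‖(x : ℂ) ^ (-s) - (n : ℂ) ^ (-s)‖ ≤ ‖s‖ * n ^ (-s.re - 1) := by
  have h := norm_image_sub_le_of_norm_deriv_le_segment'
    (f := fun y : ℝ => (y : ℂ) ^ (-s)) (f' := fun y : ℝ => (-s) * (y : ℂ) ^ (-s - 1))
    (a := n) (b := n + 1) (C := ‖s‖ * n ^ (-s.re - 1))
    (fun y hy => (aux_cpow_deriv (-s) (lt_of_lt_of_le hn hy.1)).hasDerivWithinAt)
    (fun y hy => by
      have hy0 : 0 < y := lt_of_lt_of_le hn hy.1
      rw [norm_mul, norm_neg, Complex.norm_cpow_eq_rpow_re_of_pos hy0]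
      gcongr
      simp only [Complex.sub_re, Complex.neg_re, Complex.one_re]
      exact Real.rpow_le_rpow_of_nonpos hn hy.1 (by linarith)) x hx
  refine h.trans ?_
  have : 0 ≤ ‖s‖ * n ^ (-s.re - 1) := by positivity
  nlinarith [hx.2]

lemma hterm_bound (n : ℕ) (s : ℂ) (hs : 0 < s.re) :
    ‖hterm n s‖ ≤ ‖s - 1‖ * ‖s‖ * ((n : ℝ) + 1) ^ (-s.re - 1) := by
  have hn : (0 : ℝ) < (n : ℝ) + 1 := by positivity
  set m : ℝ := (n : ℝ) + 1 with hm
  have h := norm_image_sub_le_of_norm_deriv_le_segment'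
    (f := fun y : ℝ => (s - 1) * (m : ℂ) ^ (-s) * (y : ℂ) + (y : ℂ) ^ (1 - s))
    (f' := fun y : ℝ => (s - 1) * (m : ℂ) ^ (-s) * 1 + (1 - s) * (y : ℂ) ^ (1 - s - 1))
    (a := m) (b := m + 1) (C := ‖s - 1‖ * ‖s‖ * m ^ (-s.re - 1))
    (fun y hy => (((Complex.ofRealCLM.hasDerivAt (x := y)).const_mul _).add
      (aux_cpow_deriv (1 - s) (lt_of_lt_of_le hn hy.1))).hasDerivWithinAt)
    (fun y hy => by
      have := aux_cpow_diff m hn s hs y ⟨hy.1, hy.2.le⟩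
      have e : (s - 1) * (m : ℂ) ^ (-s) * 1 + (1 - s) * (y : ℂ) ^ (1 - s - 1)
        = -((s - 1) * ((y : ℂ) ^ (-s) - (m : ℂ) ^ (-s))) := by
        rw [show 1 - s - 1 = -s by ring]; ring
      rw [e, norm_neg, norm_mul, mul_assoc]
      gcongr) (m + 1) ⟨by linarith, le_rfl⟩
  have e : hterm n s = ((s - 1) * (m : ℂ) ^ (-s) * ((m + 1 : ℝ) : ℂ) + ((m + 1 : ℝ) : ℂ) ^ (1 - s))
    - ((s - 1) * (m : ℂ) ^ (-s) * (m : ℂ) + (m : ℂ) ^ (1 - s)) := by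
    unfold hterm
    rw [hm]
    push_cast
    rw [show (n : ℂ) + 1 + 1 = n + 2 by ring]
    ring
  rw [e]
  simpa using h

lemma hterm_bound' (n : ℕ) (s : ℂ) (r : ℝ) (hr : 0 < r) (hs : r ≤ s.re) :
    ‖hterm n s‖ ≤ ‖s - 1‖ * ‖s‖ * ((n : ℝ) + 1) ^ (-r - 1) := by
  refine (hterm_bound n s (by linarith)).trans ?_
  gcongr
  · linarith [(Nat.cast_nonneg n : (0 : ℝ) ≤ n)]

lemma summable_aux (r : ℝ) (hr : 0 < r) : Summable (fun n : ℕ => ((n : ℝ) + 1) ^ (-r - 1)) := by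
  have h : Summable (fun n : ℕ => (n : ℝ) ^ (-r - 1)) := Real.summable_nat_rpow.2 (by linarith)
  have := (summable_nat_add_iff 1).2 h
  simpa using this

lemma hterm_diff (n : ℕ) : Differentiable ℂ (hterm n) := by
  intro s
  have h1 : ((n : ℂ) + 1) ≠ 0 := by exact_mod_cast Nat.succ_ne_zero n
  have h2 : ((n : ℂ) + 2) ≠ 0 := by exact_mod_cast Nat.succ_ne_zero (n + 1)
  unfold hterm
  refine ((differentiableAt_id.sub_const 1).mul ?_).sub (DifferentiableAt.sub ?_ ?_)
  · exact (differentiableAt_id.neg).const_cpow (Or.inl h1)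
  · exact (differentiableAt_id.const_sub 1).const_cpow (Or.inl h1)
  · exact (differentiableAt_id.const_sub 1).const_cpow (Or.inl h2)

lemma hterm_sum (N : ℕ) (s : ℂ) : ∑ n ∈ Finset.range N, hterm n s =
    (s - 1) * ∑ n ∈ Finset.range N, ((n : ℂ) + 1) ^ (-s) - 1 + ((N : ℂ) + 1) ^ (1 - s) := by
  induction N with
  | zero => simp
  | succ N ih =>
    rw [Finset.sum_range_succ, ih, Finset.sum_range_succ]
    unfold hterm
    push_cast
    rw [show (N : ℂ) + 1 + 1 = N + 2 by ring]
    ring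

lemma zeta1_eq_of_one_lt (s : ℂ) (hs : 1 < s.re) :
    riemannZeta₁ s = 1 + ∑' n, hterm n s := by
  have hsum : Summable (fun n => hterm n s) :=
    Summable.of_norm_bounded ((summable_aux s.re (by linarith)).mul_left _)
      (fun n => hterm_bound n s (by linarith))
  have h1 := hsum.hasSum.tendsto_sum_nat
  have hz : Summable (fun n : ℕ => ((n : ℂ) + 1) ^ (-s)) := by
    have := (summable_nat_add_iff 1).2 (Complex.summable_one_div_nat_cpow.2 hs)
    simpa [Complex.cpow_neg] using this
  have h2 := hz.hasSum.tendsto_sum_nat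
  have h3 : Filter.Tendsto (fun N : ℕ => ((N : ℂ) + 1) ^ (1 - s)) Filter.atTop (nhds 0) := by
    rw [tendsto_zero_iff_norm_tendsto_zero]
    have : Filter.Tendsto (fun N : ℕ => ((N : ℝ) + 1) ^ (-(s.re - 1))) Filter.atTop (nhds 0) :=
      (tendsto_rpow_neg_atTop (by linarith)).comp
        (Filter.tendsto_atTop_add_const_right _ 1 tendsto_natCast_atTop_atTop)
    refine this.congr (fun N => ?_)
    have := Complex.norm_cpow_eq_rpow_re_of_pos (x := (N : ℝ) + 1) (by positivity) (1 - s)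
    push_cast at this
    rw [this]
    simp
  have h4 := ((h2.const_mul (s - 1)).sub_const 1).add h3
  have h5 : ∑' n, hterm n s = (s - 1) * (∑' n : ℕ, ((n : ℂ) + 1) ^ (-s)) - 1 + 0 :=
    tendsto_nhds_unique h1 (h4.congr (fun N => (hterm_sum N s).symm))
  have hne : s ≠ 1 := by rintro rfl; simp at hs
  have h6 := riemannZeta_eq_inv_sub_mul hne
  have h7 : riemannZeta₁ s = (s - 1) * riemannZeta s := by
    rw [h6]; field_simp [sub_ne_zero.2 hne]
  rw [h7, h5, zeta_eq_tsum_one_div_nat_add_one_cpow hs]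
  simp [Complex.cpow_neg]

lemma zeta1_eq (s : ℂ) (hs : 1/4 < s.re) :
    riemannZeta₁ s = 1 + ∑' n, hterm n s := by
  have hopen : IsOpen {s : ℂ | 1/4 < s.re} := isOpen_lt continuous_const Complex.continuous_re
  have hd : DifferentiableOn ℂ (fun s => 1 + ∑' n, hterm n s) {s : ℂ | 1/4 < s.re} := by
    intro z hz
    apply DifferentiableAt.differentiableWithinAt
    set U := {s : ℂ | 1/4 < s.re} ∩ Metric.ball 0 (‖z‖ + 1)
    have hU : IsOpen U := hopen.inter Metric.isOpen_ball
    have hzU : z ∈ U := ⟨hz, by simp⟩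
    have := Complex.differentiableOn_tsum_of_summable_norm (F := hterm) (U := U)
      (u := fun n : ℕ => (‖z‖ + 1 + 1) * (‖z‖ + 1) * ((n : ℝ) + 1) ^ (-(1/4 : ℝ) - 1))
      ((summable_aux (1/4) (by norm_num)).mul_left _)
      (fun n => (hterm_diff n).differentiableOn) hU
      (fun n w hw => by
        refine (hterm_bound' n w (1/4) (by norm_num) (le_of_lt hw.1)).trans ?_
        have h1 : ‖w‖ ≤ ‖z‖ + 1 := by
          have := hw.2
          rw [mem_ball_zero_iff] at this
          exact this.le
        have h2 : ‖w - 1‖ ≤ ‖z‖ + 1 + 1 := by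
          refine (norm_sub_le _ _).trans ?_
          simpa using h1
        gcongr)
    exact (this.differentiableAt (hU.mem_nhds hzU)).const_add 1
  have := AnalyticOnNhd.eqOn_of_preconnected_of_eventuallyEq
    (differentiable_riemannZeta₁.differentiableOn.analyticOnNhd hopen)
    (hd.analyticOnNhd hopen) (convex_halfSpace_re_gt _).isPreconnected
    (z₀ := 2) (by simp; norm_num) (by
      filter_upwards [(isOpen_lt continuous_const Complex.continuous_re).mem_nhds
        (show (2 : ℂ) ∈ {s : ℂ | 1 < s.re} by simp)] with w hw
      exact zeta1_eq_of_one_lt w hw)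
  exact this hs

lemma zeta1_bound (ε : ℝ) (hε : 0 < ε) :
    ∃ R : ℝ, ∀ s : ℂ, 1/2 ≤ s.re → R ≤ ‖s‖ → ‖riemannZeta₁ s‖ ≤ ε * ‖s‖ ^ 2 := by
  have hS := summable_aux (1/2) (by norm_num)
  have ht := tendsto_sum_nat_add (fun n : ℕ => ((n : ℝ) + 1) ^ (-(1/2 : ℝ) - 1))
  obtain ⟨N, hN⟩ := ((ht.eventually (gt_mem_nhds (show (0 : ℝ) < ε / 4 by positivity)))).exists
  refine ⟨1 + 2 * (3 * N + 1) / ε, fun s hs hR => ?_⟩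
  have hs1 : 1 ≤ ‖s‖ := le_trans (by have : 0 ≤ 2 * (3 * (N : ℝ) + 1) / ε := by positivity
                                     linarith) hR
  have hsm1 : ‖s - 1‖ ≤ 2 * ‖s‖ := by
    refine (norm_sub_le _ _).trans ?_
    simp; linarith
  have hsum : Summable (fun n => ‖hterm n s‖) :=
    Summable.of_nonneg_of_le (fun _ => norm_nonneg _)
      (fun n => hterm_bound' n s (1/2) (by norm_num) hs) (hS.mul_left _)
  have hsum' := hsum.of_norm
  rw [zeta1_eq s (by linarith), ← hsum'.sum_add_tsum_nat_add N, hterm_sum]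
  have htail : ‖∑' n, hterm (n + N) s‖ ≤ 2 * ‖s‖ * ‖s‖ * (ε / 4) := by
    have hS' : Summable (fun n : ℕ => (((n + N : ℕ) : ℝ) + 1) ^ (-(1/2 : ℝ) - 1)) :=
      (summable_nat_add_iff N).2 hS
    refine (tsum_of_norm_bounded (hS'.mul_left (‖s - 1‖ * ‖s‖)).hasSum
      (fun n => hterm_bound' (n + N) s (1/2) (by norm_num) hs)).trans ?_
    rw [tsum_mul_left]
    gcongr
  have hterm1 : ∀ n : ℕ, ‖((n : ℂ) + 1) ^ (-s)‖ ≤ 1 := by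
    intro n
    have := Complex.norm_cpow_eq_rpow_re_of_pos (x := (n : ℝ) + 1) (by positivity) (-s)
    push_cast at this
    rw [this]
    exact Real.rpow_le_one_of_one_le_of_nonpos (by simp) (by simp; linarith)
  have hA : ‖∑ n ∈ Finset.range N, ((n : ℂ) + 1) ^ (-s)‖ ≤ N := by
    refine (norm_sum_le_of_le _ (fun n _ => hterm1 n)).trans ?_
    simp
  have hB : ‖((N : ℂ) + 1) ^ (1 - s)‖ ≤ N + 1 := by
    have := Complex.norm_cpow_eq_rpow_re_of_pos (x := (N : ℝ) + 1) (by positivity) (1 - s)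
    push_cast at this
    rw [this]
    calc ((N : ℝ) + 1) ^ (1 - s).re ≤ ((N : ℝ) + 1) ^ (1 : ℝ) := by
          apply Real.rpow_le_rpow_of_exponent_le (by simp)
          simp; linarith
      _ = _ := by simp
  set X := ∑ n ∈ Finset.range N, ((n : ℂ) + 1) ^ (-s)
  set Y := ((N : ℂ) + 1) ^ (1 - s)
  set T := ∑' n, hterm (n + N) s
  have e : 1 + ((s - 1) * X - 1 + Y + T) = (s - 1) * X + Y + T := by ring
  rw [e]
  have h1 : ‖(s - 1) * X + Y + T‖ ≤ 2 * ‖s‖ * N + (N + 1) + 2 * ‖s‖ * ‖s‖ * (ε / 4) := by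
    refine (norm_add₃_le).trans ?_
    rw [norm_mul]
    gcongr
  refine h1.trans ?_
  have h2 : 2 * (3 * N + 1) ≤ ‖s‖ * ε := by
    rw [← div_le_iff₀ hε]; linarith
  have h3 : ((N : ℝ) + 1) ≤ ‖s‖ * (N + 1) := by
    have : (0 : ℝ) ≤ N := Nat.cast_nonneg N
    nlinarith
  nlinarith [mul_le_mul_of_nonneg_left h2 (norm_nonneg s)]

lemma zeta_lower_s12 (s : ℂ) (hs : 2 ≤ s.re) : 1/4 ≤ ‖riemannZeta s‖ := by
  have h2 := hasSum_zeta_two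
  have h2s := (summable_nat_add_iff 2).2 h2.summable
  have h2e := h2.summable.sum_add_tsum_nat_add 2
  rw [h2.tsum_eq] at h2e
  have hs1 : 1 < s.re := by linarith
  have hz := Complex.summable_one_div_nat_cpow.2 hs1
  have hze := hz.sum_add_tsum_nat_add 2
  rw [← zeta_eq_tsum_one_div_nat_cpow hs1] at hze
  have hne : s ≠ 0 := by rintro rfl; simp at hs1; linarith
  have htail : ‖∑' n : ℕ, 1 / ((n + 2 : ℕ) : ℂ) ^ s‖ ≤ ∑' n : ℕ, 1 / ((n + 2 : ℕ) : ℝ) ^ 2 := by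
    refine tsum_of_norm_bounded h2s.hasSum (fun n => ?_)
    have := Complex.norm_cpow_eq_rpow_re_of_pos (x := ((n + 2 : ℕ) : ℝ)) (by positivity) s
    rw [norm_div, norm_one]
    rw [Complex.ofReal_natCast] at this
    rw [this]
    apply one_div_le_one_div_of_le (by positivity)
    rw [← Real.rpow_natCast]
    apply Real.rpow_le_rpow_of_exponent_le
    · push_cast; linarith [(Nat.cast_nonneg n : (0 : ℝ) ≤ n)]
    · simpa using hs
  simp only [Finset.sum_range_succ, Finset.sum_range_zero, Nat.cast_zero, Nat.cast_one,
    Complex.one_cpow, Complex.zero_cpow hne] at hze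
  simp only [Finset.sum_range_succ, Finset.sum_range_zero, Nat.cast_zero, Nat.cast_one] at h2e
  norm_num at hze h2e htail
  have hpi : Real.pi ^ 2 / 6 ≤ 7/4 := by nlinarith [Real.pi_lt_d2, Real.pi_pos]
  rw [← hze]
  set T := ∑' n : ℕ, (((n : ℂ) + 2) ^ s)⁻¹
  have := norm_sub_le (1 + T) T
  simp at this
  linarith

lemma beta_bound (w : ℂ) (hw : 1/4 ≤ w.re) (d : ℝ) (hd : 1/2 ≤ d) :
    ‖Complex.betaIntegral w d‖ ≤ ∫ x in (0:ℝ)..1, ‖(x : ℂ) ^ ((1/4 : ℂ) - 1) * (1 - (x : ℂ)) ^ ((1/2 : ℂ) - 1)‖ := by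
  unfold Complex.betaIntegral
  have hint := Complex.betaIntegral_convergent (u := 1/4) (v := 1/2) (by norm_num) (by norm_num)
  apply intervalIntegral.norm_integral_le_of_norm_le zero_le_one _ hint.norm
  have h1 : ∀ᵐ x : ℝ, x ≠ 1 := by simp [MeasureTheory.ae_iff]
  filter_upwards [h1] with x hx1 hx
  have hx0 : 0 < x := hx.1
  have hx2 : 0 < 1 - x := by
    have := lt_of_le_of_ne hx.2 hx1
    linarith
  have e : (1 - (x : ℂ)) = ((1 - x : ℝ) : ℂ) := by push_cast; ring
  rw [norm_mul, norm_mul, e]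
  simp only [Complex.norm_cpow_eq_rpow_re_of_pos hx0, Complex.norm_cpow_eq_rpow_re_of_pos hx2]
  have a1 : ((1/4 : ℂ) - 1).re ≤ (w - 1).re := by simp; linarith
  have a2 : ((1/2 : ℂ) - 1).re ≤ ((d : ℂ) - 1).re := by simp; linarith
  apply mul_le_mul
  · exact Real.rpow_le_rpow_of_exponent_ge hx0 hx.2 a1
  · exact Real.rpow_le_rpow_of_exponent_ge hx2 (by linarith) a2
  · positivity
  · positivity

lemma gamma_ratio : ∃ C : ℝ, 0 < C ∧ ∀ (w : ℂ) (d : ℝ), 1/4 ≤ w.re → 1/2 ≤ d → d ≤ 1 →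
    ‖Complex.Gamma w‖ ≤ C * ‖Complex.Gamma (w + d)‖ := by
  set B := ∫ x in (0:ℝ)..1, ‖(x : ℂ) ^ ((1/4 : ℂ) - 1) * (1 - (x : ℂ)) ^ ((1/2 : ℂ) - 1)‖ with hB
  have hB0 : 0 ≤ B := intervalIntegral.integral_nonneg zero_le_one (fun _ _ => norm_nonneg _)
  obtain ⟨d0, hd0, hmin⟩ := (isCompact_Icc (a := (1/2 : ℝ)) (b := 1)).exists_isMinOn
    ⟨1, by norm_num⟩ (f := Real.Gamma) (fun x hx => by
      apply ContinuousAt.continuousWithinAt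
      apply (Real.differentiableAt_Gamma _).continuousAt
      intro m h
      have := hx.1
      have : (0 : ℝ) ≤ m := Nat.cast_nonneg m
      linarith)
  have hg : 0 < Real.Gamma d0 := Real.Gamma_pos_of_pos (by linarith [hd0.1])
  refine ⟨(B + 1) / Real.Gamma d0, by positivity, fun w d hw hd hd1 => ?_⟩
  have h := Complex.Gamma_mul_Gamma_eq_betaIntegral (s := w) (t := d) (by linarith) (by simp; linarith)
  have h' := congrArg norm h
  rw [norm_mul, norm_mul, Complex.Gamma_ofReal, Complex.norm_real, Real.norm_eq_abs,
    abs_of_pos (Real.Gamma_pos_of_pos (by linarith))] at h'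
  have hm : Real.Gamma d0 ≤ Real.Gamma d := hmin ⟨hd, hd1⟩
  have hb := beta_bound w hw d hd
  rw [← hB] at hb
  rw [div_mul_eq_mul_div, le_div_iff₀ hg]
  calc ‖Complex.Gamma w‖ * Real.Gamma d0 ≤ ‖Complex.Gamma w‖ * Real.Gamma d := by gcongr
    _ = _ := h'
    _ ≤ ‖Complex.Gamma (w + d)‖ * (B + 1) := by gcongr; linarith
    _ = _ := by ring

lemma norm_gammaR (w : ℂ) : ‖Complex.Gammaℝ w‖ = Real.pi ^ (-w.re / 2) * ‖Complex.Gamma (w / 2)‖ := by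
  rw [Complex.Gammaℝ_def, norm_mul, Complex.norm_cpow_eq_rpow_re_of_pos Real.pi_pos]
  congr 2
  simp

lemma norm_gammaR_conj (w : ℂ) : ‖Complex.Gammaℝ ((starRingEnd ℂ) w)‖ = ‖Complex.Gammaℝ w‖ := by
  rw [norm_gammaR, norm_gammaR]
  have : (starRingEnd ℂ) w / 2 = (starRingEnd ℂ) (w / 2) := by
    rw [map_div₀, Complex.conj_ofNat]
  rw [this, Complex.Gamma_conj]
  simp

lemma gammaR_ratio : ∃ C : ℝ, 0 < C ∧ ∀ (w : ℂ) (d : ℝ), 1/2 ≤ w.re → 1 ≤ d → d ≤ 2 →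
    ‖Complex.Gammaℝ w‖ ≤ C * ‖Complex.Gammaℝ (w + d)‖ := by
  obtain ⟨C, hC, h⟩ := gamma_ratio
  refine ⟨C * Real.pi, by positivity, fun w d hw hd hd2 => ?_⟩
  have h1 := h (w / 2) (d / 2) (by simp; linarith) (by linarith) (by linarith)
  rw [norm_gammaR, norm_gammaR]
  have e : (w + d) / 2 = w / 2 + ((d / 2 : ℝ) : ℂ) := by push_cast; ring
  rw [e]
  have e2 : Real.pi ^ (-w.re / 2) ≤ Real.pi * Real.pi ^ (-(w + (d : ℂ)).re / 2) := by
    nth_rewrite 2 [← Real.rpow_one Real.pi]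
    rw [← Real.rpow_add Real.pi_pos]
    apply Real.rpow_le_rpow_of_exponent_le (by linarith [Real.pi_gt_three])
    simp
    linarith
  calc _ ≤ (Real.pi * Real.pi ^ (-(w + (d : ℂ)).re / 2)) *
        (C * ‖Complex.Gamma (w / 2 + ((d / 2 : ℝ) : ℂ))‖) := by gcongr
    _ = _ := by ring

lemma chi_eq_s12 (s : ℂ) (hs : 0 < s.re) : chi s = s * Complex.Gammaℝ s * riemannZeta₁ s := by
  have h0 : s ≠ 0 := by rintro rfl; simp at hs
  by_cases h1 : s = 1
  · subst h1; simp [chi]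
  have hg := Complex.Gammaℝ_ne_zero_of_re_pos hs
  have h2 := riemannZeta_eq_inv_sub_mul h1
  have h3 : riemannZeta₁ s = (s - 1) * riemannZeta s := by
    rw [h2]; field_simp [sub_ne_zero.2 h1]
  have h4 : s - 1 ≠ 0 := sub_ne_zero.2 h1
  have h5 : 1 - s ≠ 0 := sub_ne_zero.2 (Ne.symm h1)
  rw [h3, riemannZeta_def_of_ne_zero h0, completedRiemannZeta_eq, chi]
  field_simp
  ring

lemma chi_lower_s12 (s : ℂ) (hs : 0 < s.re) :
    1/4 * ‖s‖ ^ 2 * ‖Complex.Gammaℝ (s + 2)‖ ≤ ‖chi (s + 2)‖ := by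
  have h1 : s + 2 ≠ 1 := by intro h; have := congrArg Complex.re h; simp at this; linarith
  have h2 := riemannZeta_eq_inv_sub_mul h1
  have h3 : riemannZeta₁ (s + 2) = (s + 1) * riemannZeta (s + 2) := by
    rw [h2, show s + 2 - 1 = s + 1 by ring]
    have : s + 1 ≠ 0 := by intro h; apply h1; linear_combination h
    field_simp
  have hz := zeta_lower_s12 (s + 2) (by simp; linarith)
  rw [chi_eq_s12 (s + 2) (by simp; linarith), h3, norm_mul, norm_mul, norm_mul]
  have key : ∀ a : ℝ, 0 ≤ a → ‖s‖ ≤ ‖s + (a : ℂ)‖ := by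
    intro a ha
    rw [Complex.norm_def, Complex.norm_def]
    apply Real.sqrt_le_sqrt
    simp [Complex.normSq_apply]
    nlinarith
  have k1 := key 1 (by norm_num)
  have k2 := key 2 (by norm_num)
  push_cast at k1 k2
  calc _ = ‖s‖ * ‖Complex.Gammaℝ (s + 2)‖ * (‖s‖ * (1/4)) := by ring
    _ ≤ _ := by gcongr

lemma chi_upper (ε : ℝ) (hε : 0 < ε) : ∃ R : ℝ, ∀ w : ℂ, 1/2 ≤ w.re → R ≤ ‖w‖ →
    ‖chi w‖ ≤ ε * ‖w‖ ^ 3 * ‖Complex.Gammaℝ w‖ := by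
  obtain ⟨R, hR⟩ := zeta1_bound ε hε
  refine ⟨R, fun w hw h => ?_⟩
  rw [chi_eq_s12 w (by linarith), norm_mul, norm_mul]
  calc _ ≤ ‖w‖ * ‖Complex.Gammaℝ w‖ * (ε * ‖w‖ ^ 2) := by gcongr; exact hR w hw h
    _ = _ := by ring

lemma chi_ratio (ε : ℝ) (hε : 0 < ε) : ∃ R : ℝ, ∀ s : ℂ, 0 < s.re → R ≤ ‖s‖ →
    ‖chi s‖ ≤ ε * ‖s‖ * ‖chi (s + 2)‖ ∧ ‖chi (s + 1)‖ ≤ ε * ‖s‖ * ‖chi (s + 2)‖ := by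
  obtain ⟨C, hC, hG⟩ := gammaR_ratio
  obtain ⟨R, hR⟩ := chi_upper (ε / (32 * C)) (by positivity)
  refine ⟨max 1 R + 1, fun s hs h => ?_⟩
  have hs1 : 1 ≤ ‖s‖ := by linarith [le_max_left 1 R]
  have hs2 : R ≤ ‖s‖ - 1 := by linarith [le_max_right 1 R]
  have hl := chi_lower_s12 s hs
  have main : ∀ w : ℂ, 1/2 ≤ w.re → ‖s‖ - 1 ≤ ‖w‖ → ‖w‖ ≤ ‖s‖ + 1 →
      ‖Complex.Gammaℝ w‖ ≤ C * ‖Complex.Gammaℝ (s + 2)‖ →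
      ‖chi w‖ ≤ ε * ‖s‖ * ‖chi (s + 2)‖ := by
    intro w hw h1 h2 h3
    have h4 : ‖w‖ ≤ 2 * ‖s‖ := by linarith
    calc ‖chi w‖ ≤ ε / (32 * C) * ‖w‖ ^ 3 * ‖Complex.Gammaℝ w‖ := hR w hw (by linarith)
      _ ≤ ε / (32 * C) * (2 * ‖s‖) ^ 3 * (C * ‖Complex.Gammaℝ (s + 2)‖) := by gcongr
      _ = ε * ‖s‖ * (1/4 * ‖s‖ ^ 2 * ‖Complex.Gammaℝ (s + 2)‖) := by field_simp; ring
      _ ≤ _ := by gcongr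
  have hp1 : ‖s + 1‖ ≤ ‖s‖ + 1 := by simpa using norm_add_le s 1
  have hp2 : ‖s‖ - 1 ≤ ‖s + 1‖ := by simpa using norm_sub_le (s + 1) 1
  have hp3 : ‖1 - s‖ ≤ ‖s‖ + 1 := by simpa [add_comm] using norm_sub_le 1 s
  have hp4 : ‖s‖ - 1 ≤ ‖1 - s‖ := by simpa [add_comm] using norm_sub_le 1 (1 - s)
  constructor
  · by_cases hc : 1/2 ≤ s.re
    · refine main s hc (by linarith) (by linarith) ?_
      simpa using hG s 2 hc (by norm_num) le_rfl
    · push Not at hc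
      rw [← chi_one_sub]
      refine main (1 - s) (by simp; linarith) hp4 hp3 ?_
      rw [← norm_gammaR_conj]
      have := hG ((starRingEnd ℂ) (1 - s)) (1 + 2 * s.re) (by simp; linarith) (by linarith)
        (by linarith)
      have e : (starRingEnd ℂ) (1 - s) + ((1 + 2 * s.re : ℝ) : ℂ) = s + 2 := by
        apply Complex.ext <;> simp
        ring
      rwa [e] at this
  · refine main (s + 1) (by simp; linarith) hp2 hp1 ?_
    have := hG (s + 1) 1 (by simp; linarith) le_rfl (by norm_num)
    rwa [show s + 1 + ((1 : ℝ) : ℂ) = s + 2 by push_cast; ring] at this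

lemma chi_ne (s : ℂ) (hs : 0 < s.re) : 0 < ‖chi (s + 2)‖ := by
  refine lt_of_lt_of_le ?_ (chi_lower_s12 s hs)
  have h0 : 0 < ‖s‖ := norm_pos_iff.2 (by rintro rfl; simp at hs)
  have := norm_pos_iff.2 (Complex.Gammaℝ_ne_zero_of_re_pos (s := s + 2) (by simp; linarith))
  positivity

lemma f2_ne : ∃ R : ℝ, ∀ s : ℂ, 0 < s.re → R ≤ ‖s‖ → f2 s ≠ 0 := by
  set a : ℝ := Real.pi / 3 - 1 with ha
  have ha0 : 0 < a := by linarith [Real.pi_gt_three]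
  have hA : A = (a : ℂ) := by rw [A, ha]; push_cast; ring
  obtain ⟨R, hR⟩ := chi_ratio (a / 100) (by positivity)
  refine ⟨max R 3, fun s hs h hf => ?_⟩
  obtain ⟨h1, h2⟩ := hR s hs ((le_max_left _ _).trans h)
  have h3 : 3 ≤ ‖s‖ := (le_max_right _ _).trans h
  have hX := chi_ne s hs
  unfold f2 at hf
  rcases mul_eq_zero.1 hf with h0 | h0
  · have : s = 2 := by linear_combination h0
    rw [this] at h3; norm_num at h3
  have e : (A * s + 3) * (s - 1) ^ 2 * chi (s + 2)
    = 2 * (s - 1) * (s - 3) * chi (s + 1) + (s + 2) * (s - 3) * chi s := by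
    linear_combination h0
  have hm1 : ‖s - 1‖ ≤ 2 * ‖s‖ := by
    have := norm_sub_le s 1
    simp at this; linarith
  have hm3 : ‖s - 3‖ ≤ 2 * ‖s‖ := by
    have := norm_sub_le s 3
    simp at this; linarith
  have hp2 : ‖s + 2‖ ≤ 2 * ‖s‖ := by
    have := norm_add_le s 2
    simp at this; linarith
  have hl1 : ‖s‖ / 2 ≤ ‖s - 1‖ := by
    have := norm_add_le (s - 1) 1
    simp at this; linarith
  have hAs : a * ‖s‖ ≤ ‖A * s + 3‖ := by
    have : a * ‖s‖ = ‖(a : ℂ) * s‖ := by simp [abs_of_pos ha0]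
    rw [this, hA, Complex.norm_def, Complex.norm_def]
    apply Real.sqrt_le_sqrt
    simp [Complex.normSq_apply]
    nlinarith [mul_pos ha0 hs]
  have L : a * ‖s‖ * (‖s‖ / 2) ^ 2 * ‖chi (s + 2)‖ ≤ ‖(A * s + 3) * (s - 1) ^ 2 * chi (s + 2)‖ := by
    rw [norm_mul, norm_mul, norm_pow]
    gcongr
  have U : ‖2 * (s - 1) * (s - 3) * chi (s + 1) + (s + 2) * (s - 3) * chi s‖ ≤
      2 * (2 * ‖s‖) * (2 * ‖s‖) * (a / 100 * ‖s‖ * ‖chi (s + 2)‖)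
      + (2 * ‖s‖) * (2 * ‖s‖) * (a / 100 * ‖s‖ * ‖chi (s + 2)‖) := by
    refine (norm_add_le _ _).trans ?_
    simp only [norm_mul, Complex.norm_ofNat]
    gcongr
  rw [e] at L
  have LU := L.trans U
  have hpos : 0 < a * ‖s‖ ^ 3 * ‖chi (s + 2)‖ := by positivity
  nlinarith

lemma f2_diff : Differentiable ℂ f2 := by
  have hc : Differentiable ℂ chi := by
    have := differentiable_completedZeta₀
    unfold chi
    fun_prop
  have h1 : Differentiable ℂ (fun s => chi (s + 1)) := hc.comp (by fun_prop)
  have h2 : Differentiable ℂ (fun s => chi (s + 2)) := hc.comp (by fun_prop)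
  unfold f2
  fun_prop

theorem f2_finitely_many_zeros_right :
    {s : ℂ | 0 < s.re ∧ f2 s = 0}.Finite ∧
    {s : ℂ | 1 / 2 ≤ s.re ∧ f2 s = 0}.Finite := by
  have main : {s : ℂ | 0 < s.re ∧ f2 s = 0}.Finite := by
    obtain ⟨R, hR⟩ := f2_ne
    by_contra hinf
    have hsub : {s : ℂ | 0 < s.re ∧ f2 s = 0} ⊆ Metric.closedBall 0 R := by
      intro s hs
      rw [mem_closedBall_zero_iff]
      by_contra hlt
      push Not at hlt
      exact hR s hs.1 hlt.le hs.2
    obtain ⟨z, -, hz⟩ := Set.Infinite.exists_accPt_of_subset_isCompact hinf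
      (isCompact_closedBall (0 : ℂ) R) hsub
    have hfr := accPt_iff_frequently_nhdsNE.1 hz
    have h0 := AnalyticOnNhd.eqOn_zero_of_preconnected_of_frequently_eq_zero
      (f2_diff.differentiableOn.analyticOnNhd isOpen_univ) isPreconnected_univ
      (Set.mem_univ z) (hfr.mono fun s hs => hs.2)
    refine hR ((|R| + 1 : ℝ) : ℂ) ?_ ?_ (h0 (Set.mem_univ _))
    · rw [Complex.ofReal_re]; positivity
    · rw [Complex.norm_real, Real.norm_eq_abs, abs_of_pos (by positivity)]
      linarith [le_abs_self R]
  exact ⟨main, main.subset fun s hs => ⟨by linarith [hs.1], hs.2⟩⟩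
end
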